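/- arXiv:1805.09293 — 3 statements merged into one kernel-verified Lean document; each statement's English description precedes it below -/
import Mathlib

section
/- Let (X, 𝒜, ν) be a measure space and let p, q : X → ℝ be measurable functions with p x > 0 and q x > 0 for ν-almost every x. Let D : X → ℝ be measurable with 0 < D x < 1 for ν-almost every x. Assume the functions x ↦ p x * Real.log (D x) + q x * Real.log (1 - D x) and x ↦ p x * Real.log (p x / (p x + q x)) + q x * Real.log (q x / (p x + q x)) are ν-integrable. Then ∫ (p x * Real.log (D x) + q x * Real.log (1 - D x)) dν ≤ ∫ (p x * Real.log (p x / (p x + q x)) + q x * Real.log (q x / (p x + q x))) dν. -/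
open MeasureTheory

/-!
For fixed `a`, `b ≥ 0`, Gibbs' inequality for the weights `a / (a + b)` and `b / (a + b)` says that
`a log d + b log (1 - d)` is largest at `d = a / (a + b)`; integrate this with `a = p x`, `b = q x`.
The maximum is nonpositive, so it is integrable as soon as it dominates one integrable function
of this form.
-/

lemma mul_log_le_mul_log_div_add {a s d : ℝ} (ha : 0 ≤ a) (hs : 0 < s) (hd : 0 < d) :
    a * Real.log d ≤ a * Real.log (a / s) + (d * s - a) := by
  obtain rfl | ha := ha.eq_or_lt
  · simpa only [zero_mul, zero_add, sub_zero] using (mul_pos hd hs).le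
  have has : 0 < a / s := div_pos ha hs
  have log_ratio_le : Real.log d - Real.log (a / s) ≤ d / (a / s) - 1 := by
    simpa only [Real.log_div hd.ne' has.ne'] using Real.log_le_sub_one_of_pos (div_pos hd has)
  calc a * Real.log d
      = a * Real.log (a / s) + a * (Real.log d - Real.log (a / s)) := by ring
    _ ≤ a * Real.log (a / s) + a * (d / (a / s) - 1) := by gcongr
    _ = a * Real.log (a / s) + (d * s - a) := by field_simp

lemma sum_mul_log_le_sum_mul_log_div_sum {ι : Type*} {t : Finset ι} {a d : ι → ℝ}
    (ha : ∀ i ∈ t, 0 ≤ a i) (hd : ∀ i ∈ t, 0 < d i) (hd_sum : ∑ i ∈ t, d i ≤ 1) :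
    ∑ i ∈ t, a i * Real.log (d i) ≤ ∑ i ∈ t, a i * Real.log (a i / ∑ j ∈ t, a j) := by
  set s := ∑ j ∈ t, a j with hs_def
  obtain hs | hs := (Finset.sum_nonneg ha).eq_or_lt
  · have ha_zero : ∀ i ∈ t, a i = 0 := (Finset.sum_eq_zero_iff_of_nonneg ha).mp hs.symm
    refine (Finset.sum_congr rfl fun i hi => ?_).le
    rw [ha_zero i hi, zero_mul, zero_mul]
  calc ∑ i ∈ t, a i * Real.log (d i)
      ≤ ∑ i ∈ t, (a i * Real.log (a i / s) + (d i * s - a i)) :=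
        Finset.sum_le_sum fun i hi => mul_log_le_mul_log_div_add (ha i hi) hs (hd i hi)
    _ = ∑ i ∈ t, a i * Real.log (a i / s) + ((∑ i ∈ t, d i) * s - s) := by
        rw [Finset.sum_add_distrib, Finset.sum_sub_distrib, ← Finset.sum_mul, ← hs_def]
    _ ≤ ∑ i ∈ t, a i * Real.log (a i / s) :=
        add_le_of_nonpos_right (sub_nonpos.mpr (mul_le_of_le_one_left hs.le hd_sum))

lemma mul_log_add_mul_log_one_sub_le {a b d : ℝ} (ha : 0 ≤ a) (hb : 0 ≤ b)
    (hd₀ : 0 < d) (hd₁ : d < 1) :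
    a * Real.log d + b * Real.log (1 - d) ≤
      a * Real.log (a / (a + b)) + b * Real.log (b / (a + b)) := by
  simpa [Fin.sum_univ_two] using
    sum_mul_log_le_sum_mul_log_div_sum (t := Finset.univ) (a := ![a, b]) (d := ![d, 1 - d])
      (by simp [Fin.forall_fin_two, ha, hb]) (by simp [Fin.forall_fin_two, hd₀, hd₁]) (by simp)

lemma mul_log_div_add_add_mul_log_div_add_nonpos {a b : ℝ} (ha : 0 ≤ a) (hb : 0 ≤ b) :
    a * Real.log (a / (a + b)) + b * Real.log (b / (a + b)) ≤ 0 := by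
  have hab : 0 ≤ a + b := add_nonneg ha hb
  have log_left : Real.log (a / (a + b)) ≤ 0 := Real.log_nonpos (div_nonneg ha hab)
    (div_le_one_of_le₀ (le_add_of_nonneg_right hb) hab)
  have log_right : Real.log (b / (a + b)) ≤ 0 := Real.log_nonpos (div_nonneg hb hab)
    (div_le_one_of_le₀ (le_add_of_nonneg_left ha) hab)
  exact add_nonpos (mul_nonpos_of_nonneg_of_nonpos ha log_left)
    (mul_nonpos_of_nonneg_of_nonpos hb log_right)

section Discriminator

variable {X : Type*} [MeasurableSpace X] {ν : Measure X} {p q D : X → ℝ}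

lemma ae_mul_log_add_mul_log_one_sub_le
    (hp₀ : ∀ᵐ x ∂ν, 0 ≤ p x) (hq₀ : ∀ᵐ x ∂ν, 0 ≤ q x) (hD : ∀ᵐ x ∂ν, 0 < D x ∧ D x < 1) :
    ∀ᵐ x ∂ν, p x * Real.log (D x) + q x * Real.log (1 - D x) ≤
      p x * Real.log (p x / (p x + q x)) + q x * Real.log (q x / (p x + q x)) := by
  filter_upwards [hp₀, hq₀, hD] with x hpx hqx hDx
  exact mul_log_add_mul_log_one_sub_le hpx hqx hDx.1 hDx.2

lemma integrable_mul_log_div_add_add_mul_log_div_add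
    (hp : AEMeasurable p ν) (hq : AEMeasurable q ν)
    (hp₀ : ∀ᵐ x ∂ν, 0 ≤ p x) (hq₀ : ∀ᵐ x ∂ν, 0 ≤ q x) (hD : ∀ᵐ x ∂ν, 0 < D x ∧ D x < 1)
    (hint : Integrable (fun x => p x * Real.log (D x) + q x * Real.log (1 - D x)) ν) :
    Integrable (fun x =>
      p x * Real.log (p x / (p x + q x)) + q x * Real.log (q x / (p x + q x))) ν := by
  refine hint.mono (AEMeasurable.aestronglyMeasurable (by fun_prop)) ?_
  filter_upwards [hp₀, hq₀, ae_mul_log_add_mul_log_one_sub_le hp₀ hq₀ hD] with x hpx hqx hle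
  exact abs_le_abs_of_nonpos (mul_log_div_add_add_mul_log_div_add_nonpos hpx hqx) hle

/-- Where `p x = q x = 0`, the logarithms of `0 / 0` carry the factor `0`, so their junk value does
not matter. -/
theorem stmt_1_general (hp : AEMeasurable p ν) (hq : AEMeasurable q ν)
    (hp₀ : ∀ᵐ x ∂ν, 0 ≤ p x) (hq₀ : ∀ᵐ x ∂ν, 0 ≤ q x) (hD : ∀ᵐ x ∂ν, 0 < D x ∧ D x < 1)
    (hint : Integrable (fun x => p x * Real.log (D x) + q x * Real.log (1 - D x)) ν) :
    ∫ x, (p x * Real.log (D x) + q x * Real.log (1 - D x)) ∂ν ≤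
      ∫ x, (p x * Real.log (p x / (p x + q x)) +
        q x * Real.log (q x / (p x + q x))) ∂ν :=
  integral_mono_ae hint (integrable_mul_log_div_add_add_mul_log_div_add hp hq hp₀ hq₀ hD hint)
    (ae_mul_log_add_mul_log_one_sub_le hp₀ hq₀ hD)

end Discriminator

theorem stmt_1 {X : Type*} [MeasurableSpace X] (ν : Measure X)
    (p q D : X → ℝ)
    (hp : Measurable p) (hq : Measurable q) (hD : Measurable D)
    (hppos : ∀ᵐ x ∂ν, 0 < p x) (hqpos : ∀ᵐ x ∂ν, 0 < q x)
    (hDrange : ∀ᵐ x ∂ν, 0 < D x ∧ D x < 1)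
    (hint1 : Integrable (fun x => p x * Real.log (D x) + q x * Real.log (1 - D x)) ν)
    (hint2 : Integrable (fun x =>
      p x * Real.log (p x / (p x + q x)) + q x * Real.log (q x / (p x + q x))) ν) :
    ∫ x, (p x * Real.log (D x) + q x * Real.log (1 - D x)) ∂ν ≤
      ∫ x, (p x * Real.log (p x / (p x + q x)) +
        q x * Real.log (q x / (p x + q x))) ∂ν :=
  stmt_1_general hp.aemeasurable hq.aemeasurable (hppos.mono fun _ => le_of_lt)
    (hqpos.mono fun _ => le_of_lt) hDrange hint1
end

section
/- Let 𝒳 be a nonempty subset of ℝⁿ, f : ℝⁿ → ℝ, and D : ℝⁿ → ℝ with 0 < D x ≤ 1 for all x ∈ 𝒳. Let x* ∈ 𝒳 minimize f over 𝒳 and let ε > 0. Suppose δ ∈ ℝ and x̃ ∈ 𝒳 satisfy: δ < Real.log (D x̃), δ ≤ Real.log (D x*), and x̃ minimizes the barrier objective g x = f x + λ * (δ - Real.log (D x)) over 𝒳, where λ = ε / (Real.log (D x̃) - δ). Then x̃ is ε-optimal for the original problem: f x̃ - ε ≤ f x* ≤ f x̃. -/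
section OrderedRing

variable {α R : Type*} [Ring R]

/-- The barrier objective for minimizing `f` subject to the constraint `δ ≤ c x`, with weight `lam`.
A GAN discriminator `D` gives the constraint function `c = log ∘ D`; keeping `c` abstract avoids the
junk values of the logarithm. -/
def barrierObjective (f c : α → R) (lam δ : R) (x : α) : R :=
  f x + lam * (δ - c x)

theorem barrierObjective_add_mul_slack (f c : α → R) (lam δ : R) (x : α) :
    barrierObjective f c lam δ x + lam * (c x - δ) = f x := by
  rw [barrierObjective, add_assoc, ← mul_add, sub_add_sub_cancel, sub_self, mul_zero, add_zero]

variable [PartialOrder R] [IsOrderedRing R] {f c : α → R} {lam δ : R} {x y : α}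

theorem barrierObjective_le_of_feasible (hlam : 0 ≤ lam) (hx : δ ≤ c x) :
    barrierObjective f c lam δ x ≤ f x :=
  add_le_of_nonpos_right (mul_nonpos_of_nonneg_of_nonpos hlam (sub_nonpos.mpr hx))

theorem le_add_mul_slack_of_barrierObjective_le (hlam : 0 ≤ lam) (hy : δ ≤ c y)
    (hxy : barrierObjective f c lam δ x ≤ barrierObjective f c lam δ y) :
    f x ≤ f y + lam * (c x - δ) :=
  calc
    f x = barrierObjective f c lam δ x + lam * (c x - δ) :=
      (barrierObjective_add_mul_slack f c lam δ x).symm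
    _ ≤ f y + lam * (c x - δ) := by
      gcongr
      exact hxy.trans (barrierObjective_le_of_feasible hlam hy)

end OrderedRing

theorem stmt_5_general {α K : Type*} [Field K] [LinearOrder K] [IsStrictOrderedRing K]
    {s : Set α} {f c : α → K} {ε δ : K} {xstar xt : α}
    (hxstar : xstar ∈ s) (hxstarmin : IsMinOn f s xstar) (hε : 0 ≤ ε)
    (hxt : xt ∈ s) (hδt : δ < c xt) (hδs : δ ≤ c xstar)
    (hxtmin : IsMinOn (barrierObjective f c (ε / (c xt - δ)) δ) s xt) :
    f xt - ε ≤ f xstar ∧ f xstar ≤ f xt := by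
  have hslack : 0 < c xt - δ := sub_pos.mpr hδt
  have hweight : 0 ≤ ε / (c xt - δ) := div_nonneg hε hslack.le
  have hbarrier : ε / (c xt - δ) * (c xt - δ) = ε := div_mul_cancel₀ ε hslack.ne'
  have hbound : f xt ≤ f xstar + ε := by
    simpa only [hbarrier] using
      le_add_mul_slack_of_barrierObjective_le hweight hδs (isMinOn_iff.mp hxtmin xstar hxstar)
  exact ⟨sub_le_iff_le_add.mpr hbound, isMinOn_iff.mp hxstarmin xt hxt⟩

theorem stmt_5 {n : ℕ} (𝒳 : Set (Fin n → ℝ)) (h𝒳 : 𝒳.Nonempty)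
    (f D : (Fin n → ℝ) → ℝ)
    (hD : ∀ x ∈ 𝒳, 0 < D x ∧ D x ≤ 1)
    (xstar : Fin n → ℝ) (hxstar : xstar ∈ 𝒳)
    (hxstarmin : ∀ x ∈ 𝒳, f xstar ≤ f x)
    (ε : ℝ) (hε : 0 < ε)
    (δ : ℝ) (xt : Fin n → ℝ) (hxt : xt ∈ 𝒳)
    (hδt : δ < Real.log (D xt)) (hδs : δ ≤ Real.log (D xstar))
    (lam : ℝ) (hlam : lam = ε / (Real.log (D xt) - δ))
    (hxtmin : ∀ x ∈ 𝒳, f xt + lam * (δ - Real.log (D xt)) ≤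
      f x + lam * (δ - Real.log (D x))) :
    f xt - ε ≤ f xstar ∧ f xstar ≤ f xt := by
  subst hlam
  exact stmt_5_general (c := Real.log ∘ D) hxstar hxstarmin hε.le hxt hδt hδs hxtmin
end

section
/- Let 𝒳 = {x ∈ ℝ² | (-1 ≤ x₁ ∧ x₁ ≤ 17 ∧ 9 ≤ x₂ ∧ x₂ ≤ 17) ∨ (9 ≤ x₁ ∧ x₁ ≤ 17 ∧ -1 ≤ x₂ ∧ x₂ ≤ 9)}. The set of minimizers of the bilinear objective f(x) = x₁ * x₂ - 4 * x₁ - 4 * x₂ over 𝒳 is exactly the two-point set {(-1, 17), (17, -1)}, and the minimum value is -81. -/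
/-!
Writing the objective as `(x₁ - c) * (x₂ - c) - c ^ 2`, a point of the horizontal arm has
`l - c ≤ x₁ - c` with `l - c < 0`, and `0 < x₂ - c ≤ h - c`. Hence the product is at least
`(l - c) * (h - c)`, with equality only at the corner `(l, h)`. The vertical arm reduces to the
horizontal one by exchanging the coordinates, which produces the second minimizer `(h, l)`.
-/

open Set

theorem setOf_isMinOn_eq_of_isLeast_image {α β : Type*} [PartialOrder β] {f : α → β} {s : Set α}
    {m : β} (hm : IsLeast (f '' s) m) : {x ∈ s | IsMinOn f s x} = {x ∈ s | f x = m} := by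
  ext x
  refine and_congr_right fun hx => ⟨fun hmin => ?_, fun hxm y hy => ?_⟩
  · obtain ⟨y, hy, hym⟩ := hm.1
    exact le_antisymm ((hmin hy).trans_eq hym) (hm.2 (mem_image_of_mem f hx))
  · exact hxm.trans_le (hm.2 (mem_image_of_mem f hy))

/-- The L-shaped region with outer corner `(h, h)`, inner corner `(k, k)` and arms reaching down
to `l` in each coordinate. The corner square is part of the horizontal arm (the first rectangle),
so that the paper's feasible set is `lShape (-1) 9 17`. -/
def lShape {α : Type*} [Preorder α] (l k h : α) : Set (α × α) :=
  Icc l h ×ˢ Icc k h ∪ Icc k h ×ˢ Icc l k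

theorem mem_prod_or_swap_mem_prod_of_mem_lShape {α : Type*} [Preorder α] {l k h : α} {x : α × α}
    (hkh : k ≤ h) (hx : x ∈ lShape l k h) :
    x ∈ Icc l h ×ˢ Icc k h ∨ x.swap ∈ Icc l h ×ˢ Icc k h :=
  hx.imp_right fun ⟨hx₁, hx₂⟩ => ⟨Icc_subset_Icc_right hkh hx₂, hx₁⟩

theorem left_corner_mem_lShape {α : Type*} [Preorder α] {l k h : α} (hlk : l ≤ k) (hkh : k ≤ h) :
    (l, h) ∈ lShape l k h :=
  Or.inl ⟨left_mem_Icc.2 (hlk.trans hkh), right_mem_Icc.2 hkh⟩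

theorem right_corner_mem_lShape {α : Type*} [Preorder α] {l k h : α} (hlk : l ≤ k) (hkh : k ≤ h) :
    (h, l) ∈ lShape l k h :=
  Or.inr ⟨right_mem_Icc.2 hkh, left_mem_Icc.2 hlk⟩

section BilinearObjective

variable {R : Type*} [CommRing R]

/-- The symmetric bilinear objective with saddle point `(c, c)`; the paper's objective is the case
`c = 4`. -/
def bilinearObjective (c : R) (x : R × R) : R :=
  x.1 * x.2 - c * x.1 - c * x.2

theorem bilinearObjective_swap (c : R) (x : R × R) :
    bilinearObjective c x.swap = bilinearObjective c x := by
  simp only [bilinearObjective, Prod.fst_swap, Prod.snd_swap]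
  ring

/-- The signs are chosen so that `0 < x.2 - c` on the horizontal arm and `0 < c - x.1` at its
corner `(l, h)`, which is what the product lemmas for ordered rings ask for. -/
theorem bilinearObjective_eq_neg_mul_sub (c : R) (x : R × R) :
    bilinearObjective c x = -((x.2 - c) * (c - x.1)) - c ^ 2 := by
  simp only [bilinearObjective]
  ring

variable [PartialOrder R] {c l k h : R} {x : R × R}

theorem bilinearObjective_corner_le [IsOrderedRing R] (hlc : l ≤ c) (hlx : l ≤ x.1)
    (hcx : c ≤ x.2) (hxh : x.2 ≤ h) :
    bilinearObjective c (l, h) ≤ bilinearObjective c x := by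
  have hmul : (x.2 - c) * (c - x.1) ≤ (h - c) * (c - l) :=
    mul_le_mul_of_nonneg (sub_le_sub_right hxh c) (sub_le_sub_left hlx c)
      (sub_nonneg.2 hcx) (sub_nonneg.2 hlc)
  simp only [bilinearObjective_eq_neg_mul_sub]
  exact sub_le_sub_right (neg_le_neg hmul) (c ^ 2)

theorem bilinearObjective_eq_corner_iff [IsStrictOrderedRing R] (hlc : l < c) (hlx : l ≤ x.1)
    (hcx : c < x.2) (hxh : x.2 ≤ h) :
    bilinearObjective c x = bilinearObjective c (l, h) ↔ x = (l, h) := by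
  rw [bilinearObjective_eq_neg_mul_sub, bilinearObjective_eq_neg_mul_sub, sub_left_inj, neg_inj,
    mul_eq_mul_iff_eq_and_eq_of_pos (sub_le_sub_right hxh c) (sub_le_sub_left hlx c)
      (sub_pos.2 hcx) (sub_pos.2 hlc),
    sub_left_inj, sub_right_inj, and_comm, Prod.ext_iff]

theorem isLeast_bilinearObjective_image_lShape [IsOrderedRing R] (hlc : l ≤ c) (hck : c ≤ k)
    (hkh : k ≤ h) :
    IsLeast (bilinearObjective c '' lShape l k h) (bilinearObjective c (l, h)) := by
  refine ⟨mem_image_of_mem _ (left_corner_mem_lShape (hlc.trans hck) hkh), ?_⟩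
  rintro _ ⟨x, hx, rfl⟩
  rcases mem_prod_or_swap_mem_prod_of_mem_lShape hkh hx with ⟨hx₁, hx₂⟩ | ⟨hx₁, hx₂⟩
  · exact bilinearObjective_corner_le hlc hx₁.1 (hck.trans hx₂.1) hx₂.2
  · rw [← bilinearObjective_swap c x]
    exact bilinearObjective_corner_le hlc hx₁.1 (hck.trans hx₂.1) hx₂.2

theorem eq_corner_of_mem_lShape_of_bilinearObjective_eq [IsStrictOrderedRing R] (hlc : l < c)
    (hck : c < k) (hkh : k ≤ h) (hx : x ∈ lShape l k h)
    (hmin : bilinearObjective c x = bilinearObjective c (l, h)) :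
    x = (l, h) ∨ x = (h, l) := by
  rcases mem_prod_or_swap_mem_prod_of_mem_lShape hkh hx with ⟨hx₁, hx₂⟩ | ⟨hx₁, hx₂⟩
  · exact Or.inl <|
      (bilinearObjective_eq_corner_iff hlc hx₁.1 (hck.trans_le hx₂.1) hx₂.2).1 hmin
  · rw [← bilinearObjective_swap c x,
      bilinearObjective_eq_corner_iff hlc hx₁.1 (hck.trans_le hx₂.1) hx₂.2] at hmin
    exact Or.inr (Prod.swap_injective hmin)

theorem stmt_11_general [IsStrictOrderedRing R] (hlc : l < c) (hck : c < k) (hkh : k ≤ h) :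
    {x ∈ lShape l k h | IsMinOn (bilinearObjective c) (lShape l k h) x} = {(l, h), (h, l)} ∧
      IsLeast (bilinearObjective c '' lShape l k h) (l * h - c * l - c * h) := by
  have hleast := isLeast_bilinearObjective_image_lShape hlc.le hck.le hkh
  have hlk : l ≤ k := (hlc.trans hck).le
  refine ⟨?_, hleast⟩
  rw [setOf_isMinOn_eq_of_isLeast_image hleast]
  refine Subset.antisymm (fun x ⟨hx, hmin⟩ =>
    eq_corner_of_mem_lShape_of_bilinearObjective_eq hlc hck hkh hx hmin) ?_
  rintro x (rfl | rfl)
  · exact ⟨left_corner_mem_lShape hlk hkh, rfl⟩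
  · exact ⟨right_corner_mem_lShape hlk hkh, bilinearObjective_swap c (l, h)⟩

end BilinearObjective

theorem stmt_11 :
    let 𝒳 : Set (ℝ × ℝ) := {x | (-1 ≤ x.1 ∧ x.1 ≤ 17 ∧ 9 ≤ x.2 ∧ x.2 ≤ 17) ∨
      (9 ≤ x.1 ∧ x.1 ≤ 17 ∧ -1 ≤ x.2 ∧ x.2 ≤ 9)}
    let f : ℝ × ℝ → ℝ := fun x => x.1 * x.2 - 4 * x.1 - 4 * x.2
    {x ∈ 𝒳 | ∀ y ∈ 𝒳, f x ≤ f y} =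
      ({((-1 : ℝ), (17 : ℝ)), ((17 : ℝ), (-1 : ℝ))} : Set (ℝ × ℝ)) ∧
    IsLeast (f '' 𝒳) (-81) := by
  intro 𝒳 f
  have h𝒳 : 𝒳 = lShape (-1) 9 17 := by
    ext x
    simp only [𝒳, lShape, mem_ofPred_eq, mem_union, mem_prod, mem_Icc, and_assoc]
  have hvalue : (-81 : ℝ) = -1 * 17 - 4 * -1 - 4 * 17 := by norm_num
  rw [h𝒳, hvalue]
  exact stmt_11_general (by norm_num) (by norm_num) (by norm_num)
end
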